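/- arXiv:1407.4338 — 6 statements merged into one kernel-verified Lean document; each statement's English description precedes it below -/
import Mathlib

section
/- Characterization of finite Hausdorff distance (forward direction of the main theorem, in the branch–graph model): Let m ≥ 1 and work in ℂ × (Fin m → ℂ) with any fixed norm. Let I and J be nonempty finite index sets. Let C = K ∪ ⋃_{i∈I} B_i and C' = K' ∪ ⋃_{j∈J} B'_j, where K and K' are bounded subsets, B_i = {(z, r_i(z)) : z ∈ ℂ, |z| ≥ M_i} with r_i : ℂ → (Fin m → ℂ) continuous on {z : |z| ≥ M_i}, and B'_j = {(z, r'_j(z)) : z ∈ ℂ, |z| ≥ M'_j} with r'_j continuous on {z : |z| ≥ M'_j}. Assume that for every i ∈ I there exist j ∈ J and constants c, R ∈ ℝ such that ‖r_i(z) − r'_j(z)‖ ≤ c for all z ∈ ℂ with |z| ≥ R, and symmetrically that for every j ∈ J there exist i ∈ I and constants c, R with ‖r_i(z) − r'_j(z)‖ ≤ c for all |z| ≥ R. Then the Hausdorff distance between C and C' is finite, i.e. EMetric.hausdorffEdist C C' ≠ ⊤. -/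
theorem one_sided_aux
    (m : ℕ) (I J : Type) [Fintype I] [Nonempty J]
    (K K' : Set (ℂ × (Fin m → ℂ)))
    (hK : Bornology.IsBounded K)
    (r : I → ℂ → (Fin m → ℂ)) (M : I → ℝ)
    (r' : J → ℂ → (Fin m → ℂ)) (M' : J → ℝ)
    (hr : ∀ i : I, ContinuousOn (r i) {z : ℂ | M i ≤ ‖z‖})
    (h1 : ∀ i : I, ∃ j : J, ∃ c R : ℝ, ∀ z : ℂ, R ≤ ‖z‖ → ‖r i z - r' j z‖ ≤ c) :
    ∃ D : ℝ, ∀ x ∈ K ∪ ⋃ i : I,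
      {p : ℂ × (Fin m → ℂ) | ∃ z : ℂ, M i ≤ ‖z‖ ∧ p = (z, r i z)},
      ∃ y ∈ K' ∪ ⋃ j : J,
      {p : ℂ × (Fin m → ℂ) | ∃ z : ℂ, M' j ≤ ‖z‖ ∧ p = (z, r' j z)}, dist x y ≤ D := by
  obtain ⟨j0⟩ := ‹Nonempty J›
  have hz0 : M' j0 ≤ ‖((|M' j0| : ℝ) : ℂ)‖ := by
    rw [Complex.norm_real, Real.norm_eq_abs, abs_abs]
    exact le_abs_self _
  generalize ((|M' j0| : ℝ) : ℂ) = z0 at hz0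
  obtain ⟨D0, hD0⟩ := hK.subset_closedBall (z0, r' j0 z0)
  have key : ∀ i : I, ∃ D : ℝ, ∀ z : ℂ, M i ≤ ‖z‖ → 
      ∃ j : J, ∃ w : ℂ, M' j ≤ ‖w‖ ∧ dist (z, r i z) (w, r' j w) ≤ D := by
    intro i
    obtain ⟨j, c, R, hc⟩ := h1 i
    have hcomp : IsCompact ({z : ℂ | M i ≤ ‖z‖} ∩ Metric.closedBall 0 (max R (M' j))) :=
      (isCompact_closedBall _ _).inter_left (isClosed_le continuous_const continuous_norm)
    have hb := (hcomp.image_of_continuousOn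
      (continuousOn_id.prodMk ((hr i).mono Set.inter_subset_left))).isBounded
    obtain ⟨D1, hD1⟩ := hb.subset_closedBall (z0, r' j0 z0)
    refine ⟨max D1 (max c 0), fun z hz => ?_⟩
    by_cases h : ‖z‖ ≤ max R (M' j)
    · refine ⟨j0, z0, hz0, le_max_of_le_left ?_⟩
      exact hD1 ⟨z, ⟨hz, by simpa using h⟩, rfl⟩
    · push Not at h
      refine ⟨j, z, ((le_max_right _ _).trans h.le), le_max_of_le_right ?_⟩
      rw [Prod.dist_eq]
      refine max_le (by simp) (le_max_of_le_left ?_)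
      rw [dist_eq_norm]
      exact hc z ((le_max_left _ _).trans h.le)
  choose D hD using key
  obtain ⟨B, hB⟩ := (Set.finite_range D).bddAbove
  refine ⟨max D0 B, ?_⟩
  rintro x (hx | hx)
  · exact ⟨(z0, r' j0 z0), Or.inr (Set.mem_iUnion.2 ⟨j0, z0, hz0, rfl⟩),
      le_max_of_le_left (hD0 hx)⟩
  · obtain ⟨i, z, hz, rfl⟩ := Set.mem_iUnion.1 hx
    obtain ⟨j, w, hw, hd⟩ := hD i z hz
    exact ⟨(w, r' j w), Or.inr (Set.mem_iUnion.2 ⟨j, w, hw, rfl⟩),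
      le_max_of_le_right (hd.trans (hB ⟨i, rfl⟩))⟩

/-- **Forward direction of the main theorem** (branch–graph model):
if every infinity branch of `C` is non-divergent with some infinity branch of `C'`
and reciprocally (i.e. the curves have a similar asymptotic behavior), then the
Hausdorff distance between `C` and `C'` is finite. -/
theorem hausdorff_finite_of_similar_asymptotic_behavior
    (m : ℕ) (hm : 1 ≤ m)
    (I J : Type) [Fintype I] [Nonempty I] [Fintype J] [Nonempty J]
    (K K' : Set (ℂ × (Fin m → ℂ)))
    (hK : Bornology.IsBounded K) (hK' : Bornology.IsBounded K')
    (r : I → ℂ → (Fin m → ℂ)) (M : I → ℝ)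
    (r' : J → ℂ → (Fin m → ℂ)) (M' : J → ℝ)
    (hr : ∀ i : I, ContinuousOn (r i) {z : ℂ | M i ≤ ‖z‖})
    (hr' : ∀ j : J, ContinuousOn (r' j) {z : ℂ | M' j ≤ ‖z‖})
    (C C' : Set (ℂ × (Fin m → ℂ)))
    (hC : C = K ∪ ⋃ i : I,
      {p : ℂ × (Fin m → ℂ) | ∃ z : ℂ, M i ≤ ‖z‖ ∧ p = (z, r i z)})
    (hC' : C' = K' ∪ ⋃ j : J,
      {p : ℂ × (Fin m → ℂ) | ∃ z : ℂ, M' j ≤ ‖z‖ ∧ p = (z, r' j z)})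
    (h1 : ∀ i : I, ∃ j : J, ∃ c R : ℝ, ∀ z : ℂ, R ≤ ‖z‖ → ‖r i z - r' j z‖ ≤ c)
    (h2 : ∀ j : J, ∃ i : I, ∃ c R : ℝ, ∀ z : ℂ, R ≤ ‖z‖ → ‖r i z - r' j z‖ ≤ c) :
    EMetric.hausdorffEdist C C' ≠ ⊤ := by
  obtain ⟨D, hD⟩ := one_sided_aux m I J K K' hK r M r' M' hr h1
  obtain ⟨E, hE⟩ := one_sided_aux m J I K' K hK' r' M' r M hr' (fun j => by
    obtain ⟨i, c, R, h⟩ := h2 j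
    exact ⟨i, c, R, fun z hz => by rw [norm_sub_rev]; exact h z hz⟩)
  rw [← hC, ← hC'] at hD hE
  refine ne_top_of_le_ne_top (ENNReal.ofReal_ne_top (r := max D E))
    (Metric.hausdorffEDist_le_of_mem_edist ?_ ?_)
  · intro x hx
    obtain ⟨y, hy, h⟩ := hD x hx
    exact ⟨y, hy, by rw [edist_dist]; exact ENNReal.ofReal_le_ofReal (le_max_of_le_left h)⟩
  · intro x hx
    obtain ⟨y, hy, h⟩ := hE x hx
    exact ⟨y, hy, by rw [edist_dist]; exact ENNReal.ofReal_le_ofReal (le_max_of_le_right h)⟩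
end

section
/- Characterization of finite Hausdorff distance (backward direction of the main theorem, in the branch–graph model): Let m ≥ 1 and work in ℂ × (Fin m → ℂ) with the norm ‖(z,w)‖ = |z| + Σ_{j} |w_j|. Let r : ℂ → (Fin m → ℂ), δ₀, M ∈ ℝ, and suppose each component of r is 1-Lipschitz far from the origin, i.e. |r(x)_j − r(y)_j| ≤ |x − y| for all j ∈ Fin m whenever |x| > δ₀ and |y| > δ₀. Let B = {(z, r(z)) : z ∈ ℂ, |z| > M} and let C be any subset of ℂ × (Fin m → ℂ) containing B. Let J be a finite index set, K' a bounded subset, and for each j ∈ J let r'_j : ℂ → (Fin m → ℂ) and M'_j ∈ ℝ; assume C' ⊆ K' ∪ ⋃_{j∈J} {(y, r'_j(y)) : y ∈ ℂ, |y| > M'_j}, and that for every j ∈ J there exists a component index j₀ ∈ Fin m such that |r'_j(y)_{j₀} − r(y)_{j₀}| → ∞ as |y| → ∞. Then for every real K > 0 there exists a point p ∈ B with dist(p, q) > K for every q ∈ C'; consequently EMetric.hausdorffEdist C C' = ⊤. -/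
/-- **Backward direction of the main theorem** (branch–graph model):
if the infinity branch `B ⊆ C` diverges from every infinity branch of `C'`
(every point of `C'` with large coordinates lying on one of finitely many branches),
then points of `B` can be found arbitrarily far from every point of `C'`, measured
in the norm `‖(z,w)‖ = |z| + Σ_j |w_j|`; consequently the Hausdorff distance
between `C` and `C'` is infinite. -/
theorem hausdorff_infinite_of_divergent_branch
    (m : ℕ) (hm : 1 ≤ m)
    (r : ℂ → (Fin m → ℂ)) (δ₀ M : ℝ)
    (hlip : ∀ (j : Fin m) (x y : ℂ), δ₀ < ‖x‖ → δ₀ < ‖y‖ →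
      ‖r x j - r y j‖ ≤ ‖x - y‖)
    (B : Set (ℂ × (Fin m → ℂ)))
    (hB : B = {p : ℂ × (Fin m → ℂ) | ∃ z : ℂ, M < ‖z‖ ∧ p = (z, r z)})
    (C : Set (ℂ × (Fin m → ℂ))) (hBC : B ⊆ C)
    (J : Type) [Fintype J]
    (K' : Set (ℂ × (Fin m → ℂ))) (hK' : Bornology.IsBounded K')
    (r' : J → ℂ → (Fin m → ℂ)) (M' : J → ℝ)
    (C' : Set (ℂ × (Fin m → ℂ)))
    (hC' : C' ⊆ K' ∪ ⋃ j : J,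
      {p : ℂ × (Fin m → ℂ) | ∃ y : ℂ, M' j < ‖y‖ ∧ p = (y, r' j y)})
    (hdiv : ∀ j : J, ∃ j₀ : Fin m,
      Filter.Tendsto (fun y : ℂ => ‖r' j y j₀ - r y j₀‖)
        (Filter.comap (norm : ℂ → ℝ) Filter.atTop) Filter.atTop) :
    (∀ K : ℝ, 0 < K → ∃ p ∈ B, ∀ q ∈ C',
      K < ‖p.1 - q.1‖ + ∑ j : Fin m, ‖p.2 j - q.2 j‖) ∧
    EMetric.hausdorffEdist C C' = ⊤ := by
  have key : ∀ K : ℝ, 0 < K → ∃ p ∈ B, ∀ q ∈ C',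
      K < ‖p.1 - q.1‖ + ∑ j : Fin m, ‖p.2 j - q.2 j‖ := by
    intro K hK
    choose j₀ hj₀ using hdiv
    have hev : ∀ᶠ y in Filter.comap (norm : ℂ → ℝ) Filter.atTop,
        ∀ j, 2 * K < ‖r' j y (j₀ j) - r y (j₀ j)‖ :=
      Filter.eventually_all.2 fun j => (hj₀ j).eventually_gt_atTop (2 * K)
    rw [Filter.eventually_comap, Filter.eventually_atTop] at hev
    obtain ⟨N, hN⟩ := hev
    obtain ⟨R, hR⟩ := hK'.exists_norm_le
    obtain ⟨z, hz⟩ : ∃ z : ℂ, |M| + |δ₀| + |R| + |N| + K < ‖z‖ := by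
      refine ⟨((|M| + |δ₀| + |R| + |N| + K + 1 : ℝ) : ℂ), ?_⟩
      rw [Complex.norm_real, Real.norm_eq_abs]
      exact lt_of_lt_of_le (by linarith) (le_abs_self _)
    have h1 := le_abs_self M
    have h2 := le_abs_self δ₀
    have h3 := le_abs_self R
    have h4 := le_abs_self N
    have g1 := abs_nonneg M
    have g2 := abs_nonneg δ₀
    have g3 := abs_nonneg R
    have g4 := abs_nonneg N
    refine ⟨(z, r z), by rw [hB]; exact ⟨z, by linarith, rfl⟩, ?_⟩
    intro q hq
    have hs : ∀ i : Fin m, ‖r z i - q.2 i‖ ≤ ∑ j : Fin m, ‖r z j - q.2 j‖ := fun i =>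
      Finset.single_le_sum (f := fun j => ‖r z j - q.2 j‖)
        (fun _ _ => norm_nonneg _) (Finset.mem_univ i)
    have hs0 : 0 ≤ ∑ j : Fin m, ‖r z j - q.2 j‖ :=
      Finset.sum_nonneg fun _ _ => norm_nonneg _
    show K < ‖z - q.1‖ + ∑ j : Fin m, ‖r z j - q.2 j‖
    by_cases hc : K < ‖z - q.1‖
    · linarith
    push Not at hc
    have hzq : ‖z‖ - ‖q.1‖ ≤ ‖z - q.1‖ := norm_sub_norm_le _ _
    rcases hC' hq with h | h
    · have := hR q h
      have := norm_fst_le q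
      linarith
    · obtain ⟨j, y, hy, rfl⟩ := Set.mem_iUnion.1 h
      simp only at hc hzq hs hs0 ⊢
      have a := hN ‖y‖ (by linarith) y rfl j
      have b := hlip (j₀ j) z y (by linarith) (by linarith)
      have c := hs (j₀ j)
      have d : ‖r' j y (j₀ j) - r y (j₀ j)‖ ≤
          ‖r z (j₀ j) - r' j y (j₀ j)‖ + ‖r z (j₀ j) - r y (j₀ j)‖ := by
        rw [norm_sub_rev (r z (j₀ j)) (r' j y (j₀ j))]
        exact norm_sub_le_norm_sub_add_norm_sub _ _ _
      have := norm_nonneg (z - y)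
      linarith
  refine ⟨key, ?_⟩
  by_contra hne
  obtain ⟨D, (hD : (D : ENNReal) = _)⟩ := WithTop.ne_top_iff_exists.1 hne
  have hm0 : (0 : ℝ) ≤ m := Nat.cast_nonneg m
  have hD0 : (0 : ℝ) ≤ D := D.2
  obtain ⟨p, hp, hpq⟩ := key ((m + 1) * ((D : ℝ) + 1)) (by positivity)
  have hlt : EMetric.hausdorffEdist C C' < ((D + 1 : NNReal) : ENNReal) := by
    rw [← hD]
    exact_mod_cast lt_add_one D
  obtain ⟨q, hq, hd⟩ := Metric.exists_edist_lt_of_hausdorffEDist_lt (hBC hp) hlt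
  rw [edist_nndist, ENNReal.coe_lt_coe] at hd
  have hd' : dist p q < D + 1 := by exact_mod_cast hd
  rw [dist_eq_norm] at hd'
  have e1 : ‖p.1 - q.1‖ ≤ ‖p - q‖ := norm_fst_le (p - q)
  have e2 : ∀ j : Fin m, ‖p.2 j - q.2 j‖ ≤ ‖p - q‖ := fun j =>
    (norm_le_pi_norm (p - q).2 j).trans (norm_snd_le (p - q))
  have e3 : ∑ j : Fin m, ‖p.2 j - q.2 j‖ ≤ m * ‖p - q‖ := by
    simpa using Finset.sum_le_card_nsmul Finset.univ _ _ (fun j _ => e2 j)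
  have := hpq q hq
  nlinarith
end

section
/- Divergence criterion for leaves (Lemma characterizing divergent leaves via the positive-exponent terms): Let a, a' : ℚ → ℂ be finitely supported functions whose supports are contained in {q : 0 ≤ q}, and let g, g' : ℝ → ℂ satisfy g(x) → 0 and g'(x) → 0 as x → ∞. Then |(S_a(x) + g(x)) − (S_{a'}(x) + g'(x))| → ∞ as x → ∞ if and only if the restrictions of a and a' to {q : 0 < q} are not equal (i.e. there exists q > 0 with a(q) ≠ a'(q)). -/
open Filter

/-- `S a x = Σ_{q ∈ supp a} a(q) · x^q`, the generalized power sum attached to a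
finitely supported family of coefficients `a : ℚ →₀ ℂ` (the terms of non-negative
exponent of the parametrization of a leaf of an infinity branch). -/
noncomputable def powerSum (a : ℚ →₀ ℂ) (x : ℝ) : ℂ :=
  ∑ q ∈ a.support, a q * ((x ^ (q : ℝ) : ℝ) : ℂ)

theorem powerSum_sub_aux (a a' : ℚ →₀ ℂ) (x : ℝ) :
    powerSum a x - powerSum a' x = powerSum (a - a') x := by
  have h := Finsupp.sum_sub_index (f := a) (g := a')
    (h := fun (q : ℚ) (c : ℂ) => c * ((x ^ (q : ℝ) : ℝ) : ℂ))
    (fun q c d => sub_mul c d _)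
  exact h.symm

theorem powerSum_lead_aux (b : ℚ →₀ ℂ) (m : ℚ) (hm : ∀ q ∈ b.support, q ≤ m) :
    Tendsto (fun x : ℝ => powerSum b x * ((x ^ (-(m : ℝ)) : ℝ) : ℂ)) atTop (nhds (b m)) := by
  have h1 : Tendsto (fun x : ℝ => ∑ q ∈ b.support, b q * ((x ^ ((q : ℝ) - m) : ℝ) : ℂ)) atTop
      (nhds (∑ q ∈ b.support, if q = m then b q else 0)) := by
    refine tendsto_finsetSum _ fun q hq => ?_
    by_cases h : q = m
    · subst h
      simp
    · have hlt : (0 : ℝ) < (m : ℝ) - q := by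
        have : q < m := lt_of_le_of_ne (hm q hq) h
        have : (q : ℝ) < m := by exact_mod_cast this
        linarith
      have h2 := tendsto_rpow_neg_atTop hlt
      have h3 := (Complex.continuous_ofReal.tendsto 0).comp h2
      have h4 := h3.const_mul (b q)
      simpa [h, Function.comp_def] using h4
  have h5 : (∑ q ∈ b.support, if q = m then b q else 0) = b m := by
    rw [Finset.sum_ite_eq']
    by_cases h : m ∈ b.support
    · simp [h]
    · rw [if_neg h]
      exact (Finsupp.notMem_support_iff.mp h).symm
  rw [h5] at h1
  refine h1.congr' ?_
  filter_upwards [eventually_gt_atTop 0] with x hx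
  rw [powerSum, Finset.sum_mul]
  refine Finset.sum_congr rfl fun q _ => ?_
  rw [sub_eq_add_neg, Real.rpow_add hx]
  push_cast
  ring

/-- **Divergence criterion for leaves**: two leaves, whose parametrizations are
`S_a + g` and `S_{a'} + g'` with `g, g' → 0` at infinity and `a, a'` supported on
non-negative exponents, diverge (the modulus of their difference tends to `∞`)
if and only if their terms with positive exponent are not the same, i.e. there is
some `q > 0` with `a(q) ≠ a'(q)`. -/
theorem leaves_diverge_iff (a a' : ℚ →₀ ℂ)
    (ha : ↑a.support ⊆ {q : ℚ | 0 ≤ q}) (ha' : ↑a'.support ⊆ {q : ℚ | 0 ≤ q})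
    (g g' : ℝ → ℂ)
    (hg : Tendsto g atTop (nhds 0)) (hg' : Tendsto g' atTop (nhds 0)) :
    Tendsto (fun x : ℝ => ‖(powerSum a x + g x) - (powerSum a' x + g' x)‖)
      atTop atTop ↔ ∃ q : ℚ, 0 < q ∧ a q ≠ a' q := by
  have key : ∀ x, (powerSum a x + g x) - (powerSum a' x + g' x)
      = powerSum (a - a') x + (g x - g' x) := by
    intro x
    rw [← powerSum_sub_aux]
    ring
  simp only [key]
  have hd : Tendsto (fun x => g x - g' x) atTop (nhds 0) := by simpa using hg.sub hg'
  have hb : ∀ q ∈ (a - a').support, 0 ≤ q := by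
    intro q hq
    by_contra hn
    have h1 : a q = 0 := by
      by_contra h
      exact hn (ha (by simpa using h))
    have h2 : a' q = 0 := by
      by_contra h
      exact hn (ha' (by simpa using h))
    simp [h1, h2] at hq
  have hne : ∀ q, a q ≠ a' q ↔ q ∈ (a - a').support := by
    intro q
    simp [sub_eq_zero]
  simp only [hne]
  generalize a - a' = b at hb ⊢
  constructor
  · intro h
    by_contra hcon
    push Not at hcon
    have h0 : ∀ q ∈ b.support, q ≤ 0 := fun q hq => not_lt.mp fun hlt => hcon q hlt hq
    have h1 := ((powerSum_lead_aux b 0 h0).add hd).norm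
    simp only [Rat.cast_zero, neg_zero, Real.rpow_zero, Complex.ofReal_one, mul_one] at h1
    exact not_tendsto_atTop_of_tendsto_nhds h1 h
  · rintro ⟨q, hq, hqb⟩
    have hn : b.support.Nonempty := ⟨q, hqb⟩
    set m := b.support.max' hn with hmdef
    have hm : m ∈ b.support := b.support.max'_mem hn
    have hle : ∀ q ∈ b.support, q ≤ m := fun q hq => b.support.le_max' q hq
    have hm0 : (0 : ℝ) < m := by exact_mod_cast lt_of_lt_of_le hq (hle q hqb)
    have h2 := (Complex.continuous_ofReal.tendsto 0).comp (tendsto_rpow_neg_atTop hm0)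
    have h3 := ((powerSum_lead_aux b m hle).add (hd.mul h2)).norm
    have hpos : 0 < ‖b m + 0 * ((0 : ℝ) : ℂ)‖ := by
      simpa using hm
    have h4 := h3.pos_mul_atTop hpos (tendsto_rpow_atTop hm0)
    refine h4.congr' ?_
    filter_upwards [eventually_gt_atTop 0] with x hx
    have hxm : 0 < x ^ (m : ℝ) := Real.rpow_pos_of_pos hx _
    simp only [Function.comp]
    rw [← add_mul, norm_mul, Complex.norm_real, Real.rpow_neg hx.le, norm_inv,
      Real.norm_of_nonneg hxm.le, mul_assoc, inv_mul_cancel₀ hxm.ne', mul_one]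
end

section
/- Non-divergent branches have pairwise non-divergent leaves (concrete form of Lemma 2 on non-divergent infinity branches): Let m ≥ 1, k ≥ 0, n ≥ 1 be naturals, and let 0 = n₀ < n₁ < ⋯ < n_k < n be naturals. Let b, b' ≥ 1 and set N = b·n and N' = b'·n. For each j ∈ Fin m let u_{0,j}, …, u_{k,j} ∈ ℂ. For each c ∈ ℂ with c^N = 1 and each j ∈ Fin m, let r_{c,j} : ℝ → ℂ be given by r_{c,j}(x) = Σ_{i=0}^{k} u_{i,j}·c^{b·n_i}·x^{1 − n_i/n} + g_{c,j}(x), where x^q is the real power and each g_{c,j} is bounded on some interval [x₀, ∞); similarly, for each d ∈ ℂ with d^{N'} = 1 let r'_{d,j}(x) = Σ_{i=0}^{k} u_{i,j}·d^{b'·n_i}·x^{1 − n_i/n} + g'_{d,j}(x) with each g'_{d,j} bounded at infinity. Then for every c with c^N = 1 there exists d with d^{N'} = 1 such that for every j ∈ Fin m the difference r_{c,j}(x) − r'_{d,j}(x) is bounded as x → ∞ (so the leaves indexed by c and d do not diverge), and reciprocally for every d there exists such a c. -/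
/-- **Non-divergent branches have pairwise non-divergent leaves** (concrete form):
the leaves of two infinity branches sharing the same positive-exponent terms
`Σ_i u_{i,j} x^{1 - n_i/n}` (up to conjugation by roots of unity `c^N = 1`,
resp. `d^{N'} = 1`, with `N = b·n`, `N' = b'·n`) can be matched: for every leaf
indexed by `c` there is a leaf indexed by `d` such that all coordinate differences
`r_{c,j} - r'_{d,j}` stay bounded at infinity, and reciprocally. -/
theorem nondivergent_branches_leaves_matched
    (m k n : ℕ) (hm : 1 ≤ m) (hn : 1 ≤ n)
    (nseq : Fin (k + 1) → ℕ) (h0 : nseq 0 = 0) (hmono : StrictMono nseq)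
    (hlt : ∀ i : Fin (k + 1), nseq i < n)
    (b b' : ℕ) (hb : 1 ≤ b) (hb' : 1 ≤ b')
    (N N' : ℕ) (hN : N = b * n) (hN' : N' = b' * n)
    (u : Fin (k + 1) → Fin m → ℂ)
    (r r' : ℂ → Fin m → ℝ → ℂ)
    (hr : ∀ c : ℂ, c ^ N = 1 → ∀ j : Fin m, ∃ x₀ C : ℝ, ∀ x : ℝ, x₀ ≤ x →
      norm (r c j x - ∑ i : Fin (k + 1),
        u i j * c ^ (b * nseq i) * ((x ^ (1 - (nseq i : ℝ) / (n : ℝ)) : ℝ) : ℂ)) ≤ C)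
    (hr' : ∀ d : ℂ, d ^ N' = 1 → ∀ j : Fin m, ∃ x₀ C : ℝ, ∀ x : ℝ, x₀ ≤ x →
      norm (r' d j x - ∑ i : Fin (k + 1),
        u i j * d ^ (b' * nseq i) * ((x ^ (1 - (nseq i : ℝ) / (n : ℝ)) : ℝ) : ℂ)) ≤ C) :
    (∀ c : ℂ, c ^ N = 1 → ∃ d : ℂ, d ^ N' = 1 ∧
      ∀ j : Fin m, ∃ x₀ C : ℝ, ∀ x : ℝ, x₀ ≤ x →
        norm (r c j x - r' d j x) ≤ C) ∧
    (∀ d : ℂ, d ^ N' = 1 → ∃ c : ℂ, c ^ N = 1 ∧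
      ∀ j : Fin m, ∃ x₀ C : ℝ, ∀ x : ℝ, x₀ ≤ x →
        norm (r c j x - r' d j x) ≤ C) := by
  have key : ∀ c d : ℂ, c ^ N = 1 → d ^ N' = 1 → d ^ b' = c ^ b →
      ∀ j : Fin m, ∃ x₀ C : ℝ, ∀ x : ℝ, x₀ ≤ x → norm (r c j x - r' d j x) ≤ C := by
    intro c d hc hd hcd j
    obtain ⟨x1, C1, h1⟩ := hr c hc j
    obtain ⟨x2, C2, h2⟩ := hr' d hd j
    refine ⟨max x1 x2, C1 + C2, fun x hx => ?_⟩
    have h1x := h1 x (le_trans (le_max_left _ _) hx)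
    have h2x := h2 x (le_trans (le_max_right _ _) hx)
    simp only [pow_mul, hcd] at h1x h2x
    refine le_trans ?_ (add_le_add h1x h2x)
    refine le_trans (le_of_eq ?_) (norm_sub_le _ _)
    rw [sub_sub_sub_cancel_right]
  subst hN hN'
  constructor
  · intro c hc
    obtain ⟨d, hd⟩ := IsAlgClosed.exists_pow_nat_eq (c ^ b) hb'
    have hd1 : d ^ (b' * n) = 1 := by rw [pow_mul, hd, ← pow_mul, hc]
    exact ⟨d, hd1, key c d hc hd1 hd⟩
  · intro d hd
    obtain ⟨c, hc⟩ := IsAlgClosed.exists_pow_nat_eq (d ^ b') hb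
    have hc1 : c ^ (b * n) = 1 := by rw [pow_mul, hc, ← pow_mul, hd]
    exact ⟨c, hc1, key c d hc1 hd hc.symm⟩
end

section
/- Divergent branches separate at infinity (Lemma 3 on divergent infinity branches, concrete form): Let m ≥ 1, let r, r' : ℂ → (Fin m → ℂ), and let δ₀, M' ∈ ℝ. Assume: (i) for every j ∈ Fin m and all x, y ∈ ℂ with |x| > δ₀ and |y| > δ₀ one has |r(x)_j − r(y)_j| ≤ |x − y|; and (ii) there exists j₀ ∈ Fin m such that |r'(y)_{j₀} − r(y)_{j₀}| → ∞ as |y| → ∞. Then for every real K > 0 there exists δ > 0 such that for all x, y ∈ ℂ with |x| > δ and |y| > M' one has |x − y| + Σ_{j ∈ Fin m} |r(x)_j − r'(y)_j| > K. -/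
open Filter

/-- **Divergent branches separate at infinity** (Lemma 3, concrete form):
if each coordinate of the parametrization `r` of a branch is `1`-Lipschitz far from
the origin, and some coordinate of `r' - r` tends to `∞` in modulus, then for every
`K > 0` points `(x, r(x))` with `|x|` large enough are at distance `> K`
(in the norm `|x - y| + Σ_j |r(x)_j - r'(y)_j|`) from every point `(y, r'(y))`
of the other branch. -/
theorem divergent_branches_separate
    (m : ℕ) (hm : 1 ≤ m)
    (r r' : ℂ → (Fin m → ℂ)) (δ₀ M' : ℝ)
    (hlip : ∀ (j : Fin m) (x y : ℂ), δ₀ < ‖x‖ → δ₀ < ‖y‖ →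
      ‖r x j - r y j‖ ≤ ‖x - y‖)
    (hdiv : ∃ j₀ : Fin m,
      Tendsto (fun y : ℂ => ‖r' y j₀ - r y j₀‖)
        (Filter.comap (norm : ℂ → ℝ) atTop) atTop) :
    ∀ K : ℝ, 0 < K → ∃ δ : ℝ, 0 < δ ∧ ∀ x y : ℂ,
      δ < ‖x‖ → M' < ‖y‖ →
      K < ‖x - y‖ + ∑ j : Fin m, ‖r x j - r' y j‖ := by
  intro K hK
  obtain ⟨j, hj⟩ := hdiv
  have h1 := hj.eventually (eventually_gt_atTop K)
  rw [Filter.eventually_comap] at h1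
  obtain ⟨R, hR⟩ := Filter.eventually_atTop.1 h1
  refine ⟨|R| + |δ₀| + K, by positivity, ?_⟩
  intro x y hx _
  by_contra hcon
  rw [not_lt] at hcon
  have hs : ‖r x j - r' y j‖ ≤ ∑ j : Fin m, ‖r x j - r' y j‖ :=
    Finset.single_le_sum (f := fun j => ‖r x j - r' y j‖)
      (fun _ _ => norm_nonneg _) (Finset.mem_univ j)
  have h2 := norm_sub_norm_le x y
  have h3 := norm_nonneg (r x j - r' y j)
  have a1 := le_abs_self R
  have a2 := le_abs_self δ₀
  have a3 := abs_nonneg R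
  have a4 := abs_nonneg δ₀
  have h4 := hR ‖y‖ (by linarith) y rfl
  have h5 := hlip j x y (by linarith) (by linarith)
  have h6 := norm_sub_le_norm_sub_add_norm_sub (r' y j) (r x j) (r y j)
  rw [norm_sub_rev (r' y j) (r x j)] at h6
  linarith
end

section
/- Limits of curve points yield infinity points (key step of the lemma that points with large coordinates lie on infinity branches): Let n ≥ 1, let F be a homogeneous polynomial in n+1 variables over ℂ (an element of MvPolynomial (Fin (n+1)) ℂ that is homogeneous of some degree d), and let (a_κ)_{κ∈ℕ} be a sequence in Fin n → ℂ such that for every κ: F(a_κ(0), a_κ(1), …, a_κ(n−1), 1) = 0 and a_κ(0) ≠ 0. Assume |a_κ(0)| → ∞ as κ → ∞ and that for each i with 1 ≤ i ≤ n−1 the ratio a_κ(i)/a_κ(0) converges to some m_i ∈ ℂ. Then F(1, m_1, …, m_{n−1}, 0) = 0. -/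
theorem eval_smul_aux {σ : Type*} (F : MvPolynomial σ ℂ) (d : ℕ)
    (hF : F.IsHomogeneous d) (c : ℂ) (v : σ → ℂ) :
    MvPolynomial.eval (fun j => c * v j) F = c ^ d * MvPolynomial.eval v F := by
  rw [MvPolynomial.eval_eq, MvPolynomial.eval_eq, Finset.mul_sum]
  refine Finset.sum_congr rfl fun m hm => ?_
  have h := hF.degree_eq_sum_deg_support hm
  simp only [mul_pow, Finset.prod_mul_distrib, Finset.prod_pow_eq_pow_sum]
  rw [h]
  ring

/-- **Limits of curve points yield infinity points**: if a sequence of points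
`(a_κ(0), …, a_κ(n-1))` lies on the zero set of the homogeneous polynomial `F`
(dehomogenized at `1`), the first coordinate tends to infinity in modulus, and the
ratios `a_κ(i)/a_κ(0)` converge to `m_i`, then `(1 : m_1 : ⋯ : m_{n-1} : 0)` is a
zero of `F`, i.e. an infinity point of the projective curve. -/
theorem limit_infinity_point
    (n : ℕ) (hn : 1 ≤ n) (d : ℕ)
    (F : MvPolynomial (Fin (n + 1)) ℂ) (hF : F.IsHomogeneous d)
    (a : ℕ → Fin n → ℂ)
    (hzero : ∀ κ : ℕ, MvPolynomial.eval (Fin.snoc (a κ) (1 : ℂ)) F = 0)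
    (hne : ∀ κ : ℕ, a κ ⟨0, hn⟩ ≠ 0)
    (habs : Filter.Tendsto (fun κ : ℕ => ‖a κ ⟨0, hn⟩‖)
      Filter.atTop Filter.atTop)
    (μ : Fin n → ℂ)
    (hlim : ∀ i : Fin n, 0 < (i : ℕ) →
      Filter.Tendsto (fun κ : ℕ => a κ i / a κ ⟨0, hn⟩) Filter.atTop (nhds (μ i))) :
    MvPolynomial.eval
      (Fin.snoc (fun i : Fin n => if (i : ℕ) = 0 then 1 else μ i) (0 : ℂ)) F = 0 := by
  have key : Filter.Tendsto
      (fun κ : ℕ => (fun j : Fin (n + 1) => (a κ ⟨0, hn⟩)⁻¹ *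
        (Fin.snoc (a κ) (1 : ℂ) : Fin (n + 1) → ℂ) j)) Filter.atTop
      (nhds (Fin.snoc (fun i : Fin n => if (i : ℕ) = 0 then 1 else μ i) (0 : ℂ) :
        Fin (n + 1) → ℂ)) := by
    rw [tendsto_pi_nhds]
    intro j
    refine Fin.lastCases ?_ (fun i => ?_) j
    · simp only [Fin.snoc_last, mul_one]
      exact Filter.tendsto_inv₀_cobounded.comp (tendsto_norm_atTop_iff_cobounded.mp habs)
    · simp only [Fin.snoc_castSucc]
      by_cases hi : (i : ℕ) = 0
      · have : i = ⟨0, hn⟩ := Fin.ext hi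
        subst this
        simp [hne]
      · rw [if_neg hi]
        refine (hlim i (Nat.pos_of_ne_zero hi)).congr fun κ => ?_
        rw [div_eq_inv_mul]
  have h2 := ((MvPolynomial.continuous_eval F).tendsto _).comp key
  refine tendsto_nhds_unique h2 (tendsto_const_nhds.congr fun κ => ?_)
  simp only [Function.comp_apply]
  rw [eval_smul_aux F d hF, hzero, mul_zero]
end
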